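/- arXiv:2002.08841 — 5 statements merged into one kernel-verified Lean document; each statement's English description precedes it below -/
import Mathlib

section
/- Let 0 ≤ b2 ≤ b1 and l ≤ b2 ≤ b1 ≤ u be real numbers, and define S1 = {(v, y) : l ≤ v ≤ u, y = b2, v ≤ b2}, S2 = {(v, y) : l ≤ v ≤ u, y = v, b2 ≤ v ≤ b1}, S3 = {(v, y) : l ≤ v ≤ u, y = 0, v ≥ b1}. Then the set of pairs (v, y) ∈ ℝ² for which there exists z ∈ [0, 1]³ (no integrality required) satisfying y ≤ b2·z1 + b1·z2, y ≥ b2·(z1 + z2), y ≤ v + (b2 − l)·z1 − b1·z3, y ≥ v − u·z3, l ≤ v ≤ u, and z1 + z2 + z3 = 1, equals the convex hull of S1 ∪ S2 ∪ S3. In particular, for a single sample (n = 1) the LP relaxation is exact. -/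
/-- The reward function `r(v; b1, b2)`. -/
noncomputable def reward (b1 b2 v : ℝ) : ℝ :=
  if v ≤ b2 then b2 else if v ≤ b1 then v else 0

/-- The linear constraints of the MIP formulation for a single sample. -/
def MipCon (b1 b2 l u v y : ℝ) (z : Fin 3 → ℝ) : Prop :=
  y ≤ b2 * z 0 + b1 * z 1 ∧ b2 * (z 0 + z 1) ≤ y ∧
  y ≤ v + (b2 - l) * z 0 - b1 * z 2 ∧ v - u * z 2 ≤ y ∧
  l ≤ v ∧ v ≤ u ∧ z 0 + z 1 + z 2 = 1

/-!
Disjunctive programming (Balas): the convex hull of a finite union of nonempty convex sets `s i` is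
the union, over the weights `z` in the standard simplex, of the Minkowski sums `∑ i, z i • s i`. For
the three pieces of the graph of the reward function and fixed `z`, the summands coming from the two
horizontal pieces add up to an interval times the point `b2 * z 0`, while the diagonal piece
contributes a pair `(w, w)`. The height `y` therefore forces `w = y - b2 * z 0`, and the point
belongs to the sum exactly when `w` and `v - w` lie in the two resulting intervals: these are the
four inequalities of the relaxation linking `(v, y)` to `z`.
-/

open Set
open scoped Pointwise

section ConvexHull

variable {𝕜 E ι : Type*} [Field 𝕜] [LinearOrder 𝕜] [IsStrictOrderedRing 𝕜]
  [AddCommGroup E] [Module 𝕜 E] [Fintype ι] {s : ι → Set E}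

lemma convex_biUnion_stdSimplex_sum_smul (hs : ∀ i, Convex 𝕜 (s i)) :
    Convex 𝕜 (⋃ z ∈ stdSimplex 𝕜 ι, ∑ i, z i • s i) := by
  intro x hx y hy a b ha hb hab
  obtain ⟨z, hz, hxz⟩ := mem_iUnion₂.1 hx
  obtain ⟨w, hw, hyw⟩ := mem_iUnion₂.1 hy
  have hsplit : ∑ i, (a • z + b • w) i • s i = a • ∑ i, z i • s i + b • ∑ i, w i • s i := by
    simp only [Finset.smul_sum, smul_smul, ← Finset.sum_add_distrib]
    exact Finset.sum_congr rfl fun i _ ↦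
      (hs i).add_smul (mul_nonneg ha (hz.1 i)) (mul_nonneg hb (hw.1 i))
  refine mem_biUnion (convex_stdSimplex 𝕜 ι hz hw ha hb hab) ?_
  rw [hsplit]
  exact add_mem_add (smul_mem_smul_set hxz) (smul_mem_smul_set hyw)

lemma subset_biUnion_stdSimplex_sum_smul (hne : ∀ i, (s i).Nonempty) (i : ι) :
    s i ⊆ ⋃ z ∈ stdSimplex 𝕜 ι, ∑ j, z j • s j := by
  classical
  have hvertex : ∑ j, (Pi.single i 1 : ι → 𝕜) j • s j = s i := by
    rw [Finset.sum_eq_single_of_mem i (Finset.mem_univ i), Pi.single_eq_same, one_smul]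
    intro j _ hj
    rw [Pi.single_eq_of_ne hj, zero_smul_set (hne j)]
  rw [← hvertex]
  exact subset_biUnion_of_mem (u := fun z : ι → 𝕜 ↦ ∑ j, z j • s j) (single_mem_stdSimplex 𝕜 i)

lemma sum_smul_subset_convexHull_iUnion {z : ι → 𝕜} (hz : z ∈ stdSimplex 𝕜 ι) :
    ∑ i, z i • s i ⊆ convexHull 𝕜 (⋃ i, s i) := by
  intro x hx
  obtain ⟨p, hp, rfl⟩ := (mem_fintype_sum _ _).1 hx
  choose q hq hqp using fun i ↦ mem_smul_set.1 (hp i)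
  simp only [← hqp]
  exact (convex_convexHull 𝕜 _).sum_mem (fun i _ ↦ hz.1 i) hz.2 fun i _ ↦
    subset_convexHull 𝕜 _ (mem_iUnion_of_mem i (hq i))

theorem convexHull_iUnion_eq_biUnion_stdSimplex (hs : ∀ i, Convex 𝕜 (s i))
    (hne : ∀ i, (s i).Nonempty) :
    convexHull 𝕜 (⋃ i, s i) = ⋃ z ∈ stdSimplex 𝕜 ι, ∑ i, z i • s i :=
  (convexHull_min (iUnion_subset (subset_biUnion_stdSimplex_sum_smul hne))
    (convex_biUnion_stdSimplex_sum_smul hs)).antisymm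
    (iUnion₂_subset fun _ ↦ sum_smul_subset_convexHull_iUnion)

end ConvexHull

section GraphOn

lemma convex_graphOn {𝕜 E F : Type*} [Semiring 𝕜] [PartialOrder 𝕜] [AddCommMonoid E]
    [AddCommMonoid F] [Module 𝕜 E] [Module 𝕜 F] {s : Set E} (hs : Convex 𝕜 s) (f : E →ₗ[𝕜] F) :
    Convex 𝕜 (s.graphOn f) :=
  hs.linear_image (LinearMap.id.prod f)

lemma smul_graphOn_linearMap {R E F : Type*} [Semiring R] [AddCommMonoid E] [AddCommMonoid F]
    [Module R E] [Module R F] (c : R) (f : E →ₗ[R] F) (s : Set E) :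
    c • s.graphOn f = (c • s).graphOn f := by
  simp only [graphOn, ← image_smul, image_image, Prod.smul_mk, map_smul]

lemma mem_prod_singleton_add_graphOn_id {G : Type*} [AddCommGroup G] {s t : Set G} {c : G}
    {p : G × G} :
    p ∈ s ×ˢ {c} + t.graphOn id ↔ p.2 - c ∈ t ∧ p.1 - (p.2 - c) ∈ s := by
  constructor
  · rintro ⟨⟨x, _⟩, ⟨hx, rfl⟩, _, ⟨y, hy, rfl⟩, rfl⟩
    simpa using ⟨hy, hx⟩
  · rintro ⟨ht, hs⟩
    exact ⟨(p.1 - (p.2 - c), c), ⟨hs, rfl⟩, (p.2 - c, p.2 - c), ⟨_, ht, rfl⟩, by simp⟩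

end GraphOn

lemma smul_Icc_of_nonneg {G₀ : Type*} [GroupWithZero G₀] [PartialOrder G₀] [PosMulReflectLT G₀]
    {a b c : G₀} (ha : 0 ≤ a) (hbc : b ≤ c) : a • Icc b c = Icc (a * b) (a * c) :=
  image_mul_left_Icc ha hbc

section RewardRelaxation

variable {𝕜 : Type*} [Field 𝕜] [LinearOrder 𝕜]

/-- The three closed pieces `S1`, `S2`, `S3` of the closure of the graph of `r(·; b1, b2)` on
`[l, u]`, indexed by `0`, `1`, `2`. -/
def rewardPiece (b1 b2 l u : 𝕜) : Fin 3 → Set (𝕜 × 𝕜) :=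
  ![Icc l b2 ×ˢ {b2}, (Icc b2 b1).graphOn id, Icc b1 u ×ˢ {0}]

/-- The projection onto `(v, y)` of the LP relaxation of the single-sample MIP formulation. Over
`ℝ` the constraints after `z j ∈ Icc 0 1` are those of `MipCon`. -/
def lpRelaxation (b1 b2 l u : 𝕜) : Set (𝕜 × 𝕜) :=
  {p | ∃ z : Fin 3 → 𝕜, (∀ j, z j ∈ Icc 0 1) ∧
    p.2 ≤ b2 * z 0 + b1 * z 1 ∧ b2 * (z 0 + z 1) ≤ p.2 ∧
    p.2 ≤ p.1 + (b2 - l) * z 0 - b1 * z 2 ∧ p.1 - u * z 2 ≤ p.2 ∧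
    l ≤ p.1 ∧ p.1 ≤ u ∧ z 0 + z 1 + z 2 = 1}

variable {b1 b2 l u : 𝕜}

lemma iUnion_rewardPiece (hb : b2 ≤ b1) (hl : l ≤ b2) (hu : b1 ≤ u) :
    ⋃ j, rewardPiece b1 b2 l u j =
      {p : 𝕜 × 𝕜 | l ≤ p.1 ∧ p.1 ≤ u ∧ p.2 = b2 ∧ p.1 ≤ b2} ∪
      {p : 𝕜 × 𝕜 | l ≤ p.1 ∧ p.1 ≤ u ∧ p.2 = p.1 ∧ b2 ≤ p.1 ∧ p.1 ≤ b1} ∪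
      {p : 𝕜 × 𝕜 | l ≤ p.1 ∧ p.1 ≤ u ∧ p.2 = 0 ∧ b1 ≤ p.1} := by
  ext ⟨v, y⟩
  simp only [rewardPiece, mem_iUnion, Fin.exists_fin_succ, Fin.exists_fin_zero,
    Fin.succ_zero_eq_one, Fin.succ_one_eq_two, Matrix.cons_val, mem_prod, mem_Icc,
    mem_singleton_iff, mem_graphOn, id_eq, mem_union, mem_ofPred_eq, or_false]
  grind

lemma rewardPiece_nonempty (hb : b2 ≤ b1) (hl : l ≤ b2) (hu : b1 ≤ u) (j : Fin 3) :
    (rewardPiece b1 b2 l u j).Nonempty := by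
  fin_cases j
  · exact (nonempty_Icc.2 hl).prod (singleton_nonempty b2)
  · exact (nonempty_Icc.2 hb).graphOn
  · exact (nonempty_Icc.2 hu).prod (singleton_nonempty 0)

variable [IsStrictOrderedRing 𝕜]

lemma convex_rewardPiece (j : Fin 3) : Convex 𝕜 (rewardPiece b1 b2 l u j) := by
  fin_cases j
  · exact (convex_Icc l b2).prod (convex_singleton b2)
  · exact convex_graphOn (convex_Icc b2 b1) LinearMap.id
  · exact (convex_Icc b1 u).prod (convex_singleton 0)

lemma mem_sum_smul_rewardPiece (hb : b2 ≤ b1) (hl : l ≤ b2) (hu : b1 ≤ u) {z : Fin 3 → 𝕜}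
    (hz : ∀ j, 0 ≤ z j) {p : 𝕜 × 𝕜} :
    p ∈ ∑ j, z j • rewardPiece b1 b2 l u j ↔
      p.2 ≤ b2 * z 0 + b1 * z 1 ∧ b2 * (z 0 + z 1) ≤ p.2 ∧
      p.2 ≤ p.1 + (b2 - l) * z 0 - b1 * z 2 ∧ p.1 - u * z 2 ≤ p.2 := by
  have hsum : ∑ j, z j • rewardPiece b1 b2 l u j =
      Icc (z 0 * l + z 2 * b1) (z 0 * b2 + z 2 * u) ×ˢ {z 0 * b2} +
        (Icc (z 1 * b2) (z 1 * b1)).graphOn id := by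
    have hdiag : z 1 • (Icc b2 b1).graphOn id = (Icc (z 1 * b2) (z 1 * b1)).graphOn id := by
      rw [← smul_Icc_of_nonneg (hz 1) hb]
      exact smul_graphOn_linearMap (z 1) LinearMap.id _
    have hl' := mul_le_mul_of_nonneg_left hl (hz 0)
    have hu' := mul_le_mul_of_nonneg_left hu (hz 2)
    simp only [Fin.sum_univ_three, rewardPiece, Matrix.cons_val, smul_set_prod, hdiag,
      smul_set_singleton, smul_Icc_of_nonneg (hz _), hl, hu, smul_eq_mul, mul_zero]
    rw [add_right_comm, prod_add_prod_comm, Icc_add_Icc hl' hu', singleton_add_singleton, add_zero]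
  rw [hsum, mem_prod_singleton_add_graphOn_id]
  simp only [mem_Icc]
  constructor
  · rintro ⟨⟨hw_ge, hw_le⟩, hrest_ge, hrest_le⟩
    refine ⟨?_, ?_, ?_, ?_⟩ <;> linarith
  · rintro ⟨hy_le, hy_ge, hy_le_v, hy_ge_v⟩
    refine ⟨⟨?_, ?_⟩, ?_, ?_⟩ <;> linarith

lemma fst_mem_Icc_of_mem_sum_smul_rewardPiece (hb : b2 ≤ b1) (hl : l ≤ b2) (hu : b1 ≤ u)
    {z : Fin 3 → 𝕜} (hz : z ∈ stdSimplex 𝕜 (Fin 3)) {p : 𝕜 × 𝕜}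
    (hp : p ∈ ∑ j, z j • rewardPiece b1 b2 l u j) : p.1 ∈ Icc l u := by
  have hconv : Convex 𝕜 (Prod.fst ⁻¹' Icc l u : Set (𝕜 × 𝕜)) :=
    (convex_Icc l u).linear_preimage (LinearMap.fst 𝕜 𝕜 𝕜)
  refine convexHull_min (iUnion_subset fun j ↦ ?_) hconv (sum_smul_subset_convexHull_iUnion hz hp)
  fin_cases j
  · exact fun q hq ↦ Icc_subset_Icc_right (hb.trans hu) hq.1
  · exact fun q hq ↦ Icc_subset_Icc hl hu (mem_graphOn.1 hq).1
  · exact fun q hq ↦ Icc_subset_Icc_left (hl.trans hb) hq.1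

theorem lpRelaxation_eq_biUnion_stdSimplex (hb : b2 ≤ b1) (hl : l ≤ b2) (hu : b1 ≤ u) :
    lpRelaxation b1 b2 l u =
      ⋃ z ∈ stdSimplex 𝕜 (Fin 3), ∑ j, z j • rewardPiece b1 b2 l u j := by
  ext p
  rw [mem_iUnion₂]
  constructor
  · rintro ⟨z, hz, hy_le, hy_ge, hy_le_v, hy_ge_v, -, -, hsum⟩
    have hz₀ : ∀ j, 0 ≤ z j := fun j ↦ (hz j).1
    exact ⟨z, ⟨hz₀, by rwa [Fin.sum_univ_three]⟩,
      (mem_sum_smul_rewardPiece hb hl hu hz₀).2 ⟨hy_le, hy_ge, hy_le_v, hy_ge_v⟩⟩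
  · rintro ⟨z, hz, hp⟩
    obtain ⟨hy_le, hy_ge, hy_le_v, hy_ge_v⟩ := (mem_sum_smul_rewardPiece hb hl hu hz.1).1 hp
    obtain ⟨hlp, hpu⟩ := fst_mem_Icc_of_mem_sum_smul_rewardPiece hb hl hu hz hp
    exact ⟨z, mem_Icc_of_mem_stdSimplex hz, hy_le, hy_ge, hy_le_v, hy_ge_v, hlp, hpu,
      by rw [← Fin.sum_univ_three, hz.2]⟩

theorem lp_relaxation_single_sample_exact_general (hb : b2 ≤ b1) (hl : l ≤ b2) (hu : b1 ≤ u) :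
    lpRelaxation b1 b2 l u =
      convexHull 𝕜
        ({p : 𝕜 × 𝕜 | l ≤ p.1 ∧ p.1 ≤ u ∧ p.2 = b2 ∧ p.1 ≤ b2} ∪
         {p : 𝕜 × 𝕜 | l ≤ p.1 ∧ p.1 ≤ u ∧ p.2 = p.1 ∧ b2 ≤ p.1 ∧ p.1 ≤ b1} ∪
         {p : 𝕜 × 𝕜 | l ≤ p.1 ∧ p.1 ≤ u ∧ p.2 = 0 ∧ b1 ≤ p.1}) := by
  rw [← iUnion_rewardPiece hb hl hu, lpRelaxation_eq_biUnion_stdSimplex hb hl hu,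
    convexHull_iUnion_eq_biUnion_stdSimplex convex_rewardPiece (rewardPiece_nonempty hb hl hu)]

end RewardRelaxation

/-- The projection onto `(v, y)` of the LP relaxation of the single-sample MIP formulation
equals the convex hull of `S1 ∪ S2 ∪ S3`: the LP relaxation is exact for one sample. -/
theorem lp_relaxation_single_sample_exact (b1 b2 l u : ℝ)
    (hb2 : 0 ≤ b2) (hb : b2 ≤ b1) (hl : l ≤ b2) (hu : b1 ≤ u) :
    {p : ℝ × ℝ | ∃ z : Fin 3 → ℝ,
        (∀ j, z j ∈ Set.Icc (0 : ℝ) 1) ∧ MipCon b1 b2 l u p.1 p.2 z} =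
      convexHull ℝ
        ({p : ℝ × ℝ | l ≤ p.1 ∧ p.1 ≤ u ∧ p.2 = b2 ∧ p.1 ≤ b2} ∪
         {p : ℝ × ℝ | l ≤ p.1 ∧ p.1 ≤ u ∧ p.2 = p.1 ∧ b2 ≤ p.1 ∧ p.1 ≤ b1} ∪
         {p : ℝ × ℝ | l ≤ p.1 ∧ p.1 ≤ u ∧ p.2 = 0 ∧ b1 ≤ p.1}) := by
  exact lp_relaxation_single_sample_exact_general hb hl hu
end

section
/- Consider n samples with feature vectors w^1, …, w^n ∈ ℝ^d and bid prices 0 ≤ b2_i ≤ b1_i, let X = [L, U]^d with L < U, and define R(β) = (1/n) ∑_{i=1}^n r(w^i · β; b1_i, b2_i), l_i = min_{β ∈ X} w^i · β, and u_i = max_{β ∈ X} w^i · β. Consider the MIP problem: maximize (1/n) ∑_{i=1}^n y_i over (β, v, y, z) with β ∈ X, v_i = w^i · β, and for each i there exists z^i ∈ {0, 1}³ with y_i ≤ b2_i·z^i_1 + b1_i·z^i_2, y_i ≥ b2_i·(z^i_1 + z^i_2), y_i ≤ v_i + (b2_i − l_i)·z^i_1 − b1_i·z^i_3, y_i ≥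 v_i − u_i·z^i_3, l_i ≤ v_i ≤ u_i, z^i_1 + z^i_2 + z^i_3 = 1. Then: (i) if (β, v, y) is part of an optimal solution of the MIP, then β maximizes R over X; and (ii) if β maximizes R over X, then there exist v and y completing it to an optimal solution of the MIP, and the two optimal values coincide. -/
/-!
For a fixed score `v`, the three unit vectors `z = e₀, e₁, e₂` turn the constraints into the
branches `y = b2, v ≤ b2`, then `y = v, b2 ≤ v ≤ b1`, and `y = 0, b1 ≤ v`: together, the graph of
the reward with its jump at `b1` closed up. The reward takes the upper value at the jump, so it is
the largest feasible `y`, and maximizing out the auxiliary variables recovers the original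
objective.
-/

open Finset

/-- The feasible box `X = [L, U]^d`. -/
def box (d : ℕ) (L U : ℝ) : Set (Fin d → ℝ) := Set.Icc (fun _ => L) (fun _ => U)

/-- The average revenue `R(β) = (1/n) ∑ᵢ r(wⁱ · β; b1ᵢ, b2ᵢ)`. -/
noncomputable def avgReward (d n : ℕ) (w : Fin n → Fin d → ℝ) (b1 b2 : Fin n → ℝ)
    (β : Fin d → ℝ) : ℝ :=
  (1 / n : ℝ) * ∑ i, reward (b1 i) (b2 i) (∑ j, w i j * β j)

/-- Feasibility for the full MIP: `β ∈ X`, `vᵢ = wⁱ · β`, and for each sample `i` there is a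
binary `zⁱ` satisfying the MIP constraints. -/
def MipFeasible (d n : ℕ) (w : Fin n → Fin d → ℝ) (b1 b2 l u : Fin n → ℝ) (L U : ℝ)
    (β : Fin d → ℝ) (v y : Fin n → ℝ) : Prop :=
  β ∈ box d L U ∧ ∀ i, v i = (∑ j, w i j * β j) ∧
    ∃ z : Fin 3 → ℝ, (∀ j, z j = 0 ∨ z j = 1) ∧
      MipCon (b1 i) (b2 i) (l i) (u i) (v i) (y i) z

section Lift

variable {α β γ : Type*} [Preorder γ] {f : α → γ} {g : β → γ} {s : Set α} {t : Set β}
  {π : β → α} {σ : α → β}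

theorem isMaxOn_of_isMaxOn_lift (hσ : Set.MapsTo σ s t) (hfg : ∀ x ∈ s, f x ≤ g (σ x))
    (hgf : ∀ p ∈ t, g p ≤ f (π p)) {p : β} (hp : p ∈ t) (hmax : IsMaxOn g t p) :
    IsMaxOn f s (π p) := fun x hx =>
  calc f x ≤ g (σ x) := hfg x hx
    _ ≤ g p := hmax (hσ hx)
    _ ≤ f (π p) := hgf p hp

theorem isMaxOn_lift_of_isMaxOn (hπ : Set.MapsTo π t s) (hfg : ∀ x ∈ s, f x ≤ g (σ x))
    (hgf : ∀ p ∈ t, g p ≤ f (π p)) {x : α} (hx : x ∈ s) (hmax : IsMaxOn f s x) :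
    IsMaxOn g t (σ x) := fun p hp =>
  calc g p ≤ f (π p) := hgf p hp
    _ ≤ f x := hmax (hπ hp)
    _ ≤ g (σ x) := hfg x hx

end Lift

theorem exists_eq_single_of_binary_of_sum_eq_one {ι R : Type*} [Fintype ι] [DecidableEq ι]
    [Semiring R] [PartialOrder R] [IsOrderedCancelAddMonoid R] [ZeroLEOneClass R] [Nontrivial R]
    {z : ι → R} (hz : ∀ i, z i = 0 ∨ z i = 1) (hsum : ∑ i, z i = 1) :
    ∃ i, z = Pi.single i 1 := by
  have hnonneg : ∀ i, 0 ≤ z i := fun i => by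
    rcases hz i with h | h <;> simp [h]
  obtain ⟨i, -, hi⟩ : ∃ i ∈ univ, z i ≠ 0 :=
    exists_ne_zero_of_sum_ne_zero (hsum ▸ one_ne_zero)
  have hi_one : z i = 1 := (hz i).resolve_left hi
  have hrest : ∑ j ∈ univ.erase i, z j = 0 := by
    rw [← add_sum_erase univ z (mem_univ i), hi_one] at hsum
    exact add_eq_left.mp hsum
  refine ⟨i, funext fun j => ?_⟩
  rcases eq_or_ne j i with rfl | hji
  · rw [Pi.single_eq_same, hi_one]
  · rw [Pi.single_eq_of_ne hji]
    exact (sum_eq_zero_iff_of_nonneg fun k _ => hnonneg k).mp hrest j (by simp [hji])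

section Sample

variable {b1 b2 l u v y : ℝ}

theorem reward_nonneg (hb2 : 0 ≤ b2) (v : ℝ) : 0 ≤ reward b1 b2 v := by
  unfold reward
  split_ifs <;> linarith

theorem mipCon_single_zero :
    MipCon b1 b2 l u v y (Pi.single 0 1) ↔ v ∈ Set.Icc l u ∧ y = b2 ∧ v ≤ b2 := by
  simp only [MipCon, Pi.single_apply, Fin.reduceEq, if_true, if_false, Set.mem_Icc]
  grind

theorem mipCon_single_one :
    MipCon b1 b2 l u v y (Pi.single 1 1) ↔ v ∈ Set.Icc l u ∧ y = v ∧ b2 ≤ v ∧ v ≤ b1 := by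
  simp only [MipCon, Pi.single_apply, Fin.reduceEq, if_true, if_false, Set.mem_Icc]
  grind

theorem mipCon_single_two :
    MipCon b1 b2 l u v y (Pi.single 2 1) ↔ v ∈ Set.Icc l u ∧ y = 0 ∧ b1 ≤ v := by
  simp only [MipCon, Pi.single_apply, Fin.reduceEq, if_true, if_false, Set.mem_Icc]
  grind

theorem exists_binary_mipCon_iff :
    (∃ z : Fin 3 → ℝ, (∀ j, z j = 0 ∨ z j = 1) ∧ MipCon b1 b2 l u v y z) ↔
      v ∈ Set.Icc l u ∧ (y = b2 ∧ v ≤ b2 ∨ y = v ∧ b2 ≤ v ∧ v ≤ b1 ∨ y = 0 ∧ b1 ≤ v) := by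
  have exists_iff_single :
      (∃ z : Fin 3 → ℝ, (∀ j, z j = 0 ∨ z j = 1) ∧ MipCon b1 b2 l u v y z) ↔
        ∃ k, MipCon b1 b2 l u v y (Pi.single k 1) := by
    constructor
    · rintro ⟨z, hz, hcon⟩
      have hsum : ∑ j, z j = 1 := by
        rw [Fin.sum_univ_three]
        exact hcon.2.2.2.2.2.2
      obtain ⟨k, rfl⟩ := exists_eq_single_of_binary_of_sum_eq_one hz hsum
      exact ⟨k, hcon⟩
    · rintro ⟨k, hcon⟩
      refine ⟨Pi.single k 1, fun j => ?_, hcon⟩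
      rw [Pi.single_apply]
      exact (ite_eq_or_eq _ _ _).symm
  rw [exists_iff_single, Fin.exists_fin_succ, Fin.exists_fin_two]
  exact (or_congr mipCon_single_zero (or_congr mipCon_single_one mipCon_single_two)).trans
    (by rw [and_or_left, and_or_left])

theorem exists_binary_mipCon_reward (hv : v ∈ Set.Icc l u) :
    ∃ z : Fin 3 → ℝ, (∀ j, z j = 0 ∨ z j = 1) ∧ MipCon b1 b2 l u v (reward b1 b2 v) z := by
  refine exists_binary_mipCon_iff.mpr ⟨hv, ?_⟩
  unfold reward
  split_ifs with h2 h1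
  · exact .inl ⟨rfl, h2⟩
  · exact .inr (.inl ⟨rfl, (not_le.mp h2).le, h1⟩)
  · exact .inr (.inr ⟨rfl, (not_le.mp h1).le⟩)

theorem MipCon.le_reward {z : Fin 3 → ℝ} (hb2 : 0 ≤ b2) (hz : ∀ j, z j = 0 ∨ z j = 1)
    (hcon : MipCon b1 b2 l u v y z) : y ≤ reward b1 b2 v := by
  obtain ⟨-, ⟨rfl, h2⟩ | ⟨rfl, -, h1⟩ | ⟨rfl, -⟩⟩ := exists_binary_mipCon_iff.mp ⟨z, hz, hcon⟩
  · rw [reward, if_pos h2]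
  · rw [reward, if_pos h1]
    split_ifs with h2
    exacts [h2, le_rfl]
  · exact reward_nonneg hb2 v

end Sample

section Problem

variable {ι E : Type*}

/-- The feasible set of the MIP for an arbitrary set `X` of decisions and arbitrary scores
`f i β` in place of `wⁱ · β`; its elements are the triples `(β, v, y)`, with the binary variables
projected out. -/
def mipFeasibleSet (X : Set E) (f : ι → E → ℝ) (b1 b2 l u : ι → ℝ) :
    Set (E × (ι → ℝ) × (ι → ℝ)) :=
  {p | p.1 ∈ X ∧ ∀ i, p.2.1 i = f i p.1 ∧
    ∃ z : Fin 3 → ℝ, (∀ j, z j = 0 ∨ z j = 1) ∧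
      MipCon (b1 i) (b2 i) (l i) (u i) (p.2.1 i) (p.2.2 i) z}

/-- The lift of a decision `β` to the MIP: each `vᵢ` is the score and each `yᵢ` its reward. -/
noncomputable def rewardLift (f : ι → E → ℝ) (b1 b2 : ι → ℝ) (β : E) :
    E × (ι → ℝ) × (ι → ℝ) :=
  (β, fun i => f i β, fun i => reward (b1 i) (b2 i) (f i β))

variable {X : Set E} {f : ι → E → ℝ} {b1 b2 l u : ι → ℝ}

theorem mapsTo_rewardLift (hf : ∀ i, Set.MapsTo (f i) X (Set.Icc (l i) (u i))) :
    Set.MapsTo (rewardLift f b1 b2) X (mipFeasibleSet X f b1 b2 l u) :=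
  fun _ hβ => ⟨hβ, fun i => ⟨rfl, exists_binary_mipCon_reward (hf i hβ)⟩⟩

theorem le_reward_of_mem_mipFeasibleSet (hb2 : ∀ i, 0 ≤ b2 i) {p : E × (ι → ℝ) × (ι → ℝ)}
    (hp : p ∈ mipFeasibleSet X f b1 b2 l u) (i : ι) :
    p.2.2 i ≤ reward (b1 i) (b2 i) (f i p.1) := by
  obtain ⟨hv, z, hz, hcon⟩ := hp.2 i
  exact hv ▸ hcon.le_reward (hb2 i) hz

theorem mip_problem_equiv_general [Fintype ι] {c : ι → ℝ} (hc : ∀ i, 0 ≤ c i)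
    (hb2 : ∀ i, 0 ≤ b2 i) (hf : ∀ i, Set.MapsTo (f i) X (Set.Icc (l i) (u i))) :
    (∀ β v y, (β, v, y) ∈ mipFeasibleSet X f b1 b2 l u →
      IsMaxOn (fun p => ∑ i, c i * p.2.2 i) (mipFeasibleSet X f b1 b2 l u) (β, v, y) →
      β ∈ X ∧ IsMaxOn (fun β => ∑ i, c i * reward (b1 i) (b2 i) (f i β)) X β) ∧
    (∀ β ∈ X, IsMaxOn (fun β => ∑ i, c i * reward (b1 i) (b2 i) (f i β)) X β →
      ∃ v y, (β, v, y) ∈ mipFeasibleSet X f b1 b2 l u ∧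
        IsMaxOn (fun p => ∑ i, c i * p.2.2 i) (mipFeasibleSet X f b1 b2 l u) (β, v, y) ∧
        ∑ i, c i * y i = ∑ i, c i * reward (b1 i) (b2 i) (f i β)) := by
  have hlift := mapsTo_rewardLift (b1 := b1) (b2 := b2) hf
  have hproj : Set.MapsTo Prod.fst (mipFeasibleSet X f b1 b2 l u) X := fun _ hp => hp.1
  have hvalue : ∀ p ∈ mipFeasibleSet X f b1 b2 l u,
      ∑ i, c i * p.2.2 i ≤ ∑ i, c i * reward (b1 i) (b2 i) (f i p.1) := fun p hp =>
    sum_le_sum fun i _ =>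
      mul_le_mul_of_nonneg_left (le_reward_of_mem_mipFeasibleSet hb2 hp i) (hc i)
  exact ⟨fun β v y hp hmax =>
      ⟨hp.1, isMaxOn_of_isMaxOn_lift hlift (fun _ _ => le_rfl) hvalue hp hmax⟩,
    fun β hβ hmax => ⟨_, _, hlift hβ,
      isMaxOn_lift_of_isMaxOn (σ := rewardLift f b1 b2) hproj (fun _ _ => le_rfl) hvalue hβ hmax,
      rfl⟩⟩

end Problem

/-- The MIP formulation is equivalent to the original reserve price optimization problem. -/
theorem mip_problem_equiv (d n : ℕ) (hn : 0 < n)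
    (w : Fin n → Fin d → ℝ) (b1 b2 : Fin n → ℝ)
    (hb2 : ∀ i, 0 ≤ b2 i) (hb : ∀ i, b2 i ≤ b1 i)
    (L U : ℝ) (hLU : L < U) (l u : Fin n → ℝ)
    (hl : ∀ i, IsLeast ((fun β => ∑ j, w i j * β j) '' box d L U) (l i))
    (hu : ∀ i, IsGreatest ((fun β => ∑ j, w i j * β j) '' box d L U) (u i)) :
    (∀ β v y,
      (MipFeasible d n w b1 b2 l u L U β v y ∧
        ∀ β' v' y', MipFeasible d n w b1 b2 l u L U β' v' y' →
          (1 / n : ℝ) * ∑ i, y' i ≤ (1 / n : ℝ) * ∑ i, y i) →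
      (β ∈ box d L U ∧
        ∀ β' ∈ box d L U, avgReward d n w b1 b2 β' ≤ avgReward d n w b1 b2 β))
    ∧
    (∀ β, β ∈ box d L U →
      (∀ β' ∈ box d L U, avgReward d n w b1 b2 β' ≤ avgReward d n w b1 b2 β) →
      ∃ v y,
        (MipFeasible d n w b1 b2 l u L U β v y ∧
          ∀ β' v' y', MipFeasible d n w b1 b2 l u L U β' v' y' →
            (1 / n : ℝ) * ∑ i, y' i ≤ (1 / n : ℝ) * ∑ i, y i) ∧
        (1 / n : ℝ) * ∑ i, y i = avgReward d n w b1 b2 β) := by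
  simpa [mipFeasibleSet, MipFeasible, isMaxOn_iff, avgReward, mul_sum, and_assoc] using
    mip_problem_equiv_general (c := fun _ => 1 / n) (fun _ => by positivity) hb2
      fun i β hβ => ⟨(hl i).2 ⟨β, hβ, rfl⟩, (hu i).2 ⟨β, hβ, rfl⟩⟩
end

section
/- Consider n samples with feature vectors w^1, …, w^n ∈ ℝ^d and bid prices 0 ≤ b2_i ≤ b1_i, let X = [L, U]^d with L < U, and define R(β) = (1/n) ∑_{i=1}^n r(w^i · β; b1_i, b2_i), l_i = min_{β ∈ X} w^i · β, u_i = max_{β ∈ X} w^i · β. Then for every β ∈ X there exist v, y and, for each i, z^i ∈ [0, 1]³ satisfying the LP relaxation constraints (v_i = w^i · β; y_i ≤ b2_i·z^i_1 + b1_i·z^i_2; y_i ≥ b2_i·(z^i_1 + z^i_2); y_i ≤ v_i + (b2_i − l_i)·z^i_1 − b1_i·z^i_3; y_i ≥ v_i − u_i·z^i_3; l_i ≤ v_i ≤ u_i; z^i_1 + z^i_2 + z^i_3 = 1) with objective (1/n) ∑ y_i ≥ R(β); consequently, the optimal value of the LP relaxation is an upper bound on max_{β ∈ X} R(β). Moreover,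 for any feasible point (β, v, y, z) of the LP relaxation, β is feasible for the original problem (β ∈ X). -/
open Finset

/-- Feasibility for the LP relaxation: `β ∈ X`, `vᵢ = wⁱ · β`, and for each sample `i` the
variables `zⁱ ∈ [0,1]³` satisfy the linear constraints. -/
def LpFeasible (d n : ℕ) (w : Fin n → Fin d → ℝ) (b1 b2 l u : Fin n → ℝ) (L U : ℝ)
    (β : Fin d → ℝ) (v y : Fin n → ℝ) (z : Fin n → Fin 3 → ℝ) : Prop :=
  β ∈ box d L U ∧ ∀ i, v i = (∑ j, w i j * β j) ∧
    (∀ j, z i j ∈ Set.Icc (0 : ℝ) 1) ∧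
    MipCon (b1 i) (b2 i) (l i) (u i) (v i) (y i) (z i)

/-!
At a 0-1 vector `z` the constraints of a sample pin `y` to one branch of the reward: `b2`, `v` or
`0`, according to the position of the single `1`. Choosing for each sample the branch on which
`v = w · β` lies therefore gives a feasible point whose objective is exactly `R(β)`.
-/

/-- The branch of the reward on which `v` lies: `0` for the constant value `b2`, `1` for the value
`v`, `2` for the value `0`. It is the position of the `1` in the 0-1 vector `z` of a sample. -/
noncomputable def rewardBranch (b1 b2 v : ℝ) : Fin 3 :=
  if v ≤ b2 then 0 else if v ≤ b1 then 1 else 2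

section SingleSample

variable {b1 b2 l u v y : ℝ}

theorem mipCon_single_zero_iff :
    MipCon b1 b2 l u v y (Pi.single 0 1) ↔ v ∈ Set.Icc l u ∧ v ≤ b2 ∧ y = b2 := by
  have constraints : MipCon b1 b2 l u v y (Pi.single 0 1) ↔
      y ≤ b2 ∧ b2 ≤ y ∧ y ≤ v + (b2 - l) ∧ v ≤ y ∧ l ≤ v ∧ v ≤ u := by
    simp [MipCon]
  grind

theorem mipCon_single_one_iff :
    MipCon b1 b2 l u v y (Pi.single 1 1) ↔ v ∈ Set.Icc l u ∧ v ∈ Set.Icc b2 b1 ∧ y = v := by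
  have constraints : MipCon b1 b2 l u v y (Pi.single 1 1) ↔
      y ≤ b1 ∧ b2 ≤ y ∧ y ≤ v ∧ v ≤ y ∧ l ≤ v ∧ v ≤ u := by
    simp [MipCon]
  grind

theorem mipCon_single_two_iff :
    MipCon b1 b2 l u v y (Pi.single 2 1) ↔ v ∈ Set.Icc l u ∧ b1 ≤ v ∧ y = 0 := by
  have constraints : MipCon b1 b2 l u v y (Pi.single 2 1) ↔
      y ≤ 0 ∧ 0 ≤ y ∧ y ≤ v - b1 ∧ v - u ≤ y ∧ l ≤ v ∧ v ≤ u := by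
    simp [MipCon]
  grind

theorem mipCon_reward (hv : v ∈ Set.Icc l u) :
    MipCon b1 b2 l u v (reward b1 b2 v) (Pi.single (rewardBranch b1 b2 v) 1) := by
  unfold reward rewardBranch
  split_ifs with h2 h1
  · exact mipCon_single_zero_iff.2 ⟨hv, h2, rfl⟩
  · exact mipCon_single_one_iff.2 ⟨hv, ⟨(not_le.1 h2).le, h1⟩, rfl⟩
  · exact mipCon_single_two_iff.2 ⟨hv, (not_le.1 h1).le, rfl⟩

end SingleSample

section Samples

variable {d n : ℕ} {w : Fin n → Fin d → ℝ} {l u : Fin n → ℝ} {L U : ℝ}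

theorem lpFeasible_reward (b1 b2 : Fin n → ℝ) {β : Fin d → ℝ} (hβ : β ∈ box d L U)
    (hv : ∀ i, ∑ j, w i j * β j ∈ Set.Icc (l i) (u i)) :
    LpFeasible d n w b1 b2 l u L U β (fun i => ∑ j, w i j * β j)
      (fun i => reward (b1 i) (b2 i) (∑ j, w i j * β j))
      (fun i => Pi.single (rewardBranch (b1 i) (b2 i) (∑ j, w i j * β j)) 1) :=
  ⟨hβ, fun i => ⟨rfl, mem_Icc_of_mem_stdSimplex (single_mem_stdSimplex ℝ _),
    mipCon_reward (hv i)⟩⟩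

theorem lp_relaxation_valid_general (b1 b2 : Fin n → ℝ)
    (hl : ∀ i, l i ∈ lowerBounds ((fun β => ∑ j, w i j * β j) '' box d L U))
    (hu : ∀ i, u i ∈ upperBounds ((fun β => ∑ j, w i j * β j) '' box d L U)) :
    (∀ β ∈ box d L U, ∃ (v y : Fin n → ℝ) (z : Fin n → Fin 3 → ℝ),
      LpFeasible d n w b1 b2 l u L U β v y z ∧
      avgReward d n w b1 b2 β ≤ (1 / n : ℝ) * ∑ i, y i) ∧
    (∀ β v y z, LpFeasible d n w b1 b2 l u L U β v y z → β ∈ box d L U) := by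
  refine ⟨fun β hβ => ?_, fun β v y z h => h.1⟩
  have hv (i : Fin n) : ∑ j, w i j * β j ∈ Set.Icc (l i) (u i) :=
    ⟨hl i (Set.mem_image_of_mem _ hβ), hu i (Set.mem_image_of_mem _ hβ)⟩
  exact ⟨_, _, _, lpFeasible_reward b1 b2 hβ hv, le_rfl⟩

end Samples

/-- The LP relaxation upper-bounds the original problem: every `β ∈ X` can be completed to an
LP-feasible point whose objective is at least `R(β)`; and the `β`-part of any LP-feasible
point is feasible for the original problem. -/
theorem lp_relaxation_valid (d n : ℕ) (hn : 0 < n)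
    (w : Fin n → Fin d → ℝ) (b1 b2 : Fin n → ℝ)
    (hb2 : ∀ i, 0 ≤ b2 i) (hb : ∀ i, b2 i ≤ b1 i)
    (L U : ℝ) (hLU : L < U) (l u : Fin n → ℝ)
    (hl : ∀ i, IsLeast ((fun β => ∑ j, w i j * β j) '' box d L U) (l i))
    (hu : ∀ i, IsGreatest ((fun β => ∑ j, w i j * β j) '' box d L U) (u i)) :
    (∀ β ∈ box d L U, ∃ (v y : Fin n → ℝ) (z : Fin n → Fin 3 → ℝ),
      LpFeasible d n w b1 b2 l u L U β v y z ∧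
      avgReward d n w b1 b2 β ≤ (1 / n : ℝ) * ∑ i, y i) ∧
    (∀ β v y z, LpFeasible d n w b1 b2 l u L U β v y z → β ∈ box d L U) :=
  lp_relaxation_valid_general b1 b2 (fun i => (hl i).2) (fun i => (hu i).2)
end

section
/- Let l and u be real numbers with l ≤ 0 and u > 1. Then the convex hull of the closure of the graph {(v, r(v; 1, 0)) : v ∈ [l, u]} equals Q(l, u) := {(v, y) ∈ [l, u] × ℝ : y ≥ 0, y ≤ (v − l)/(1 − l), y ≤ (u − v)/(u − 1)}. -/
/-!
The graph of `r(·; b, 0)` on `[l, u]` contains the points `(l, 0)`, `(b, b)`, `(u, 0)`, and it is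
made of two pieces of the segment from `(l, 0)` to `(u, 0)` and one of the segment from `(0, 0)`
to `(b, b)`, so it lies in the triangle with these vertices. A triangle is convex and closed, so
this one is the convex hull of the closure of the graph. Its inequalities say that barycentric
coordinates are nonnegative.
-/

section Convexity

theorem convexHull_closure_eq_of_isClosed {𝕜 E : Type*} [Semiring 𝕜] [PartialOrder 𝕜]
    [AddCommMonoid E] [Module 𝕜 E] [TopologicalSpace E] {s t : Set E}
    (hs : IsClosed (convexHull 𝕜 s)) (hst : s ⊆ t) (hts : t ⊆ convexHull 𝕜 s) :
    convexHull 𝕜 (closure t) = convexHull 𝕜 s :=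
  (convexHull_min (closure_minimal hts hs) (convex_convexHull 𝕜 s)).antisymm
    (convexHull_mono (hst.trans subset_closure))

variable {𝕜 : Type*} [Field 𝕜] [LinearOrder 𝕜] [IsStrictOrderedRing 𝕜]

theorem mem_convexHull_triple {E : Type*} [AddCommGroup E] [Module 𝕜 E] {x y z p : E} :
    p ∈ convexHull 𝕜 {x, y, z} ↔
      ∃ α β γ : 𝕜, 0 ≤ α ∧ 0 ≤ β ∧ 0 ≤ γ ∧ α + β + γ = 1 ∧ α • x + β • y + γ • z = p := by
  constructor
  · rw [convexHull_insert (Set.insert_nonempty y {z}), convexHull_pair, mem_convexJoin]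
    rintro ⟨_, rfl, _, ⟨c, d, hc, hd, hcd, rfl⟩, ⟨a, b, ha, hb, hab, rfl⟩⟩
    refine ⟨a, b * c, b * d, ha, mul_nonneg hb hc, mul_nonneg hb hd, ?_, ?_⟩
    · rw [add_assoc, ← mul_add, hcd, mul_one, hab]
    · rw [smul_add, smul_smul, smul_smul, add_assoc]
  · rintro ⟨α, β, γ, hα, hβ, hγ, hsum, rfl⟩
    refine mem_convexHull_of_exists_fintype ![α, β, γ] ![x, y, z] ?_ ?_ ?_ ?_
    · simp [Fin.forall_fin_succ, hα, hβ, hγ]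
    · simpa [Fin.sum_univ_three] using hsum
    · simp [Fin.forall_fin_succ]
    · simp [Fin.sum_univ_three]

theorem mk_mem_convexHull_triangle_iff {l c u h v y : 𝕜} (hlu : l < u) (hh : 0 < h) :
    (v, y) ∈ convexHull 𝕜 {(l, 0), (c, h), (u, 0)} ↔
      0 ≤ y ∧ y * (c - l) ≤ h * (v - l) ∧ y * (u - c) ≤ h * (u - v) := by
  have : 0 < u - l := sub_pos.2 hlu
  simp only [mem_convexHull_triple, Prod.smul_mk, Prod.mk_add_mk, Prod.mk.injEq, smul_eq_mul,
    mul_zero, zero_add, add_zero]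
  constructor
  · rintro ⟨α, β, γ, hα, hβ, hγ, hsum, rfl, rfl⟩
    obtain rfl : β = 1 - α - γ := by linarith
    refine ⟨mul_nonneg hβ hh.le, sub_nonneg.1 ?_, sub_nonneg.1 ?_⟩
    · calc 0 ≤ γ * (h * (u - l)) := by positivity
        _ = h * (α * l + (1 - α - γ) * c + γ * u - l) - (1 - α - γ) * h * (c - l) := by ring
    · calc 0 ≤ α * (h * (u - l)) := by positivity
        _ = h * (u - (α * l + (1 - α - γ) * c + γ * u)) - (1 - α - γ) * h * (u - c) := by ring
  · rintro ⟨hy, hleft, hright⟩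
    refine ⟨(h * (u - v) - y * (u - c)) / (h * (u - l)), y / h,
      (h * (v - l) - y * (c - l)) / (h * (u - l)), div_nonneg (sub_nonneg.2 hright) (by positivity),
      by positivity, div_nonneg (sub_nonneg.2 hleft) (by positivity), ?_, ?_, ?_⟩
    all_goals field_simp
    all_goals ring

theorem convexHull_triangle_eq {l c u h : 𝕜} (hlc : l < c) (hcu : c < u) (hh : 0 < h) :
    convexHull 𝕜 {(l, 0), (c, h), (u, 0)} =
      {p : 𝕜 × 𝕜 | p.1 ∈ Set.Icc l u ∧ 0 ≤ p.2 ∧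
        p.2 ≤ h * ((p.1 - l) / (c - l)) ∧ p.2 ≤ h * ((u - p.1) / (u - c))} := by
  ext ⟨v, y⟩
  have hcl : 0 < c - l := sub_pos.2 hlc
  have huc : 0 < u - c := sub_pos.2 hcu
  simp only [mk_mem_convexHull_triangle_iff (hlc.trans hcu) hh, Set.mem_ofPred_eq, ← mul_div_assoc,
    le_div_iff₀ hcl, le_div_iff₀ huc]
  refine ⟨fun hp ↦ ⟨?_, hp⟩, And.right⟩
  obtain ⟨hy, hleft, hright⟩ := hp
  exact ⟨sub_nonneg.1 (nonneg_of_mul_nonneg_right ((mul_nonneg hy hcl.le).trans hleft) hh),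
    sub_nonneg.1 (nonneg_of_mul_nonneg_right ((mul_nonneg hy huc.le).trans hright) hh)⟩

end Convexity

section Reward

theorem reward_of_le {b₁ b₂ v : ℝ} (hv : v ≤ b₂) : reward b₁ b₂ v = b₂ :=
  if_pos hv

theorem reward_of_mem_Ioc {b₁ b₂ v : ℝ} (hv : v ∈ Set.Ioc b₂ b₁) : reward b₁ b₂ v = v := by
  rw [reward, if_neg hv.1.not_ge, if_pos hv.2]

theorem reward_of_lt {b₁ b₂ v : ℝ} (hb : b₂ ≤ b₁) (hv : b₁ < v) : reward b₁ b₂ v = 0 := by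
  rw [reward, if_neg (hb.trans_lt hv).not_ge, if_neg hv.not_ge]

variable {l b u : ℝ}

theorem vertices_subset_graph_reward (hl : l ≤ 0) (hb : 0 < b) (hbu : b < u) :
    {(l, 0), (b, b), (u, 0)} ⊆ {p : ℝ × ℝ | p.1 ∈ Set.Icc l u ∧ p.2 = reward b 0 p.1} := by
  have hlb : l ≤ b := hl.trans hb.le
  rintro _ (rfl | rfl | rfl)
  · exact ⟨Set.left_mem_Icc.2 (hlb.trans hbu.le), (reward_of_le hl).symm⟩
  · exact ⟨⟨hlb, hbu.le⟩, (reward_of_mem_Ioc ⟨hb, le_rfl⟩).symm⟩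
  · exact ⟨Set.right_mem_Icc.2 (hlb.trans hbu.le), (reward_of_lt hb.le hbu).symm⟩

theorem graph_reward_subset_convexHull (hl : l ≤ 0) (hb : 0 ≤ b) (hbu : b ≤ u) :
    {p : ℝ × ℝ | p.1 ∈ Set.Icc l u ∧ p.2 = reward b 0 p.1} ⊆
      convexHull ℝ {(l, 0), (b, b), (u, 0)} := by
  rintro ⟨v, y⟩ ⟨hv : v ∈ Set.Icc l u, hy : y = reward b 0 v⟩
  subst hy
  set T := convexHull ℝ {(l, 0), (b, b), (u, (0 : ℝ))}
  have hT : Convex ℝ T := convex_convexHull ℝ _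
  have hleft : (l, 0) ∈ T := subset_convexHull ℝ _ (by simp)
  have hapex : (b, b) ∈ T := subset_convexHull ℝ _ (by simp)
  have hright : (u, 0) ∈ T := subset_convexHull ℝ _ (by simp)
  have hbase {w : ℝ} (hw : w ∈ Set.Icc l u) : (w, 0) ∈ T := by
    refine hT.segment_subset hleft hright ?_
    rw [← Prod.image_mk_segment_left, segment_eq_Icc (hw.1.trans hw.2)]
    exact Set.mem_image_of_mem _ hw
  rcases le_or_gt v 0 with hv₀ | hv₀
  · simpa only [reward_of_le hv₀] using hbase hv
  rcases le_or_gt v b with hvb | hbv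
  · have horigin : (0 : ℝ × ℝ) ∈ T := hbase ⟨hl, hb.trans hbu⟩
    have hb₀ : b ≠ 0 := (hv₀.trans_le hvb).ne'
    have hscale : (v / b) • (b, b) = (v, v) := by simp [hb₀]
    rw [reward_of_mem_Ioc ⟨hv₀, hvb⟩, ← hscale]
    exact hT.smul_mem_of_zero_mem horigin hapex
      ⟨div_nonneg hv₀.le hb, div_le_one_of_le₀ hvb hb⟩
  · simpa only [reward_of_lt hb hbv] using hbase hv

end Reward

theorem convexHull_closure_graph_general (l b u : ℝ) (hl : l ≤ 0) (hb : 0 < b) (hbu : b < u) :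
    convexHull ℝ (closure {p : ℝ × ℝ | p.1 ∈ Set.Icc l u ∧ p.2 = reward b 0 p.1}) =
      {p : ℝ × ℝ | p.1 ∈ Set.Icc l u ∧ 0 ≤ p.2 ∧
        p.2 ≤ b * ((p.1 - l) / (b - l)) ∧ p.2 ≤ b * ((u - p.1) / (u - b))} := by
  have hclosed : IsClosed (convexHull ℝ {(l, 0), (b, b), (u, (0 : ℝ))}) :=
    (Set.toFinite _).isClosed_convexHull ℝ
  rw [convexHull_closure_eq_of_isClosed hclosed (vertices_subset_graph_reward hl hb hbu)
      (graph_reward_subset_convexHull hl hb.le hbu.le),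
    convexHull_triangle_eq (hl.trans_lt hb) hbu hb]

/-- For `l ≤ 0 < 1 < u`, the convex hull of the closure of the graph of `r(·; 1, 0)` on
`[l, u]` is `Q(l, u) = {(v, y) ∈ [l, u] × ℝ : y ≥ 0, y ≤ (v − l)/(1 − l), y ≤ (u − v)/(u − 1)}`. -/
theorem convexHull_closure_graph (l u : ℝ) (hl : l ≤ 0) (hu : 1 < u) :
    convexHull ℝ (closure {p : ℝ × ℝ | p.1 ∈ Set.Icc l u ∧ p.2 = reward 1 0 p.1}) =
      {p : ℝ × ℝ | p.1 ∈ Set.Icc l u ∧ 0 ≤ p.2 ∧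
        p.2 ≤ (p.1 - l) / (1 - l) ∧ p.2 ≤ (u - p.1) / (u - 1)} := by
  simpa only [one_mul] using convexHull_closure_graph_general l 1 u hl one_pos hu
end

section
/- Let G = (V_G, E_G) be a finite simple graph and let k ≥ 1 be an integer. Construct the reserve-price instance with n = |V_G|² + |E_G| samples: |V_G|² samples with feature vector 𝟙 (the all-ones vector in ℝ^{V_G}), first bid k and second bid 0; and for each edge e = {u, v} ∈ E_G one sample with feature vector 𝟙_e (equal to 1 in coordinates u and v and 0 elsewhere), first bid 2 and second bid 1.5. For a vertex subset V_H ⊆ V_G with |V_H| = k, let β_H ∈ {0, 1}^{V_G} be its indicator vector and let E_H be the set of edges of G with both endpoints in V_H. Then R(β_H) = (1/n)·(k·|V_G|² + 1.5·|E_G| + 0.5·|E_H|), where R(β) is the average of r(w · β; b1, b2) over the n samples. -/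
open Finset
open scoped Classical

section Reward

variable {b1 b2 v : ℝ}

lemma reward_of_le_s12 (h : v ≤ b2) : reward b1 b2 v = b2 :=
  if_pos h

lemma reward_of_lt_of_le (h₂ : b2 < v) (h₁ : v ≤ b1) : reward b1 b2 v = v :=
  (if_neg h₂.not_ge).trans (if_pos h₁)

lemma reward_of_le_of_le (h₂ : b2 ≤ v) (h₁ : v ≤ b1) : reward b1 b2 v = v := by
  obtain rfl | h₂ := h₂.eq_or_lt
  · exact reward_of_le_s12 le_rfl
  · exact reward_of_lt_of_le h₂ h₁

end Reward

section EdgeSum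

variable {V R : Type*} {S : Set V} {e : Sym2 V}

lemma add_map_indicator_of_mem_sym2 [AddCommMonoidWithOne R] (he : e ∈ S.sym2) :
    Sym2.add (e.map (S.indicator (1 : V → R))) = 2 := by
  induction e with | _ a b
  obtain ⟨ha, hb⟩ := Set.mk_mem_sym2_iff.mp he
  simp [ha, hb, one_add_one_eq_two]

lemma add_map_indicator_le_one_of_notMem_sym2 [AddCommMonoidWithOne R] [Preorder R]
    [ZeroLEOneClass R] (he : e ∉ S.sym2) :
    Sym2.add (e.map (S.indicator (1 : V → R))) ≤ 1 := by
  induction e with | _ a b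
  rw [Set.mk_mem_sym2_iff] at he
  by_cases ha : a ∈ S
  · have hb : b ∉ S := fun hb ↦ he ⟨ha, hb⟩
    simp [ha, hb]
  · by_cases hb : b ∈ S <;> simp [ha, hb]

end EdgeSum

section EdgeReward

variable {V : Type*} {b1 b2 : ℝ}

/-- A second bid in `[1, 2]` separates the pairs inside `S` (value `2`) from all others (value at
most `1`). -/
lemma reward_add_map_indicator (hb2_ge : 1 ≤ b2) (hb2_le : b2 ≤ 2) (hb1 : 2 ≤ b1) (S : Set V)
    (e : Sym2 V) :
    reward b1 b2 (Sym2.add (e.map (S.indicator 1))) =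
      b2 + if e ∈ S.sym2 then 2 - b2 else 0 := by
  split_ifs with he
  · rw [add_map_indicator_of_mem_sym2 he, reward_of_le_of_le hb2_le hb1, add_sub_cancel]
  · rw [reward_of_le_s12 ((add_map_indicator_le_one_of_notMem_sym2 he).trans hb2_ge), add_zero]

lemma sum_reward_add_map_indicator (hb2_ge : 1 ≤ b2) (hb2_le : b2 ≤ 2) (hb1 : 2 ≤ b1) (S : Set V)
    (E : Finset (Sym2 V)) :
    ∑ e ∈ E, reward b1 b2 (Sym2.add (e.map (S.indicator 1))) =
      b2 * #E + (2 - b2) * #{e ∈ E | e ∈ S.sym2} := by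
  simp_rw [reward_add_map_indicator hb2_ge hb2_le hb1, sum_add_distrib, ← sum_filter, sum_const,
    nsmul_eq_mul, mul_comm]

end EdgeReward

/-- In the hardness reduction instance built from a graph `G` and `k ≥ 1`
(`|V_G|²` samples `(𝟙, k, 0)` and one sample `(𝟙_e, 2, 1.5)` per edge `e`),
the average revenue of the indicator vector `β_H` of a `k`-vertex subset `V_H` is
`(1/n)(k·|V_G|² + 1.5·|E_G| + 0.5·|E_H|)`. -/
theorem reward_of_indicator {V : Type*} [Fintype V] [DecidableEq V]
    (G : SimpleGraph V) [DecidableRel G.Adj]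
    (k : ℕ) (hk : 1 ≤ k) (VH : Finset V) (hVH : VH.card = k)
    (n : ℕ) (hn : n = (Fintype.card V) ^ 2 + G.edgeFinset.card)
    (β : V → ℝ) (hβ : ∀ v, β v = if v ∈ VH then 1 else 0)
    (EH : Finset (Sym2 V))
    (hEH : EH = G.edgeFinset.filter (fun e => ∀ v ∈ e, v ∈ VH)) :
    (1 / (n : ℝ)) *
        (((Fintype.card V) ^ 2 : ℝ) * reward (k : ℝ) 0 (∑ v, β v) +
          ∑ e ∈ G.edgeFinset,
            reward 2 1.5 (Sym2.lift ⟨fun a b => β a + β b, fun a b => by ring⟩ e)) =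
      (1 / (n : ℝ)) *
        ((k : ℝ) * ((Fintype.card V) ^ 2 : ℝ) + 1.5 * (G.edgeFinset.card : ℝ) +
          0.5 * (EH.card : ℝ)) := by
  have hβ_indicator : β = (VH : Set V).indicator 1 := by
    ext v
    simp [hβ, Set.indicator_apply]
  have hvertex : reward k 0 (∑ v, β v) = k := by
    have hsum : ∑ v, β v = k := by simp [hβ, hVH]
    rw [hsum, reward_of_le_of_le k.cast_nonneg le_rfl]
  have hlift (e : Sym2 V) :
      Sym2.lift ⟨fun a b ↦ β a + β b, fun a b ↦ by ring⟩ e = Sym2.add (e.map β) := by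
    induction e with | _ a b
    rfl
  have hEH_sym2 : EH = {e ∈ G.edgeFinset | e ∈ (VH : Set V).sym2} := by
    rw [hEH]
    exact filter_congr fun e _ ↦ Set.mem_sym2_iff_subset.symm
  have hedge := sum_reward_add_map_indicator (b1 := 2) (b2 := 1.5) (by norm_num) (by norm_num)
    le_rfl (VH : Set V) G.edgeFinset
  simp_rw [hlift]
  rw [hvertex, hβ_indicator, hedge, ← hEH_sym2]
  ring
end
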